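/- Let p > 1 and a, b, L > 0, and let u be a nontrivial C¹ weak solution of −Δ^{a,b}_p u = λ^{a,b}_{1,p}(0,L) |u|^{p−2} u on (0,L) with u(0) = u(L) = 0. Then u has definite sign: either u(t) > 0 for all t ∈ (0,L), or u(t) < 0 for all t ∈ (0,L). -/

import Mathlib

open Set

/-- `u` is C¹ on `[α, γ]` with derivative `u'` there. -/
def C1On (α γ : ℝ) (u u' : ℝ → ℝ) : Prop :=
  (∀ t ∈ Set.Icc α γ, HasDerivWithinAt u (u' t) (Set.Icc α γ) t) ∧
  ContinuousOn u' (Set.Icc α γ)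

/-- Admissible functions on `[0, L]`: C¹ with zero boundary values. -/
def Adm (L : ℝ) (u u' : ℝ → ℝ) : Prop :=
  C1On 0 L u u' ∧ u 0 = 0 ∧ u L = 0

/-- The asymmetric energy integrand `a^p (s⁺)^p + b^p (s⁻)^p`. -/
noncomputable def asymE (p a b s : ℝ) : ℝ :=
  a ^ p * (max s 0) ^ p + b ^ p * (max (-s) 0) ^ p

/-- The asymmetric flux `a^p (s⁺)^(p-1) - b^p (s⁻)^(p-1)`. -/
noncomputable def asymFlux (p a b s : ℝ) : ℝ :=
  a ^ p * (max s 0) ^ (p - 1) - b ^ p * (max (-s) 0) ^ (p - 1)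

/-- The first Dirichlet eigenvalue `λ^{a,b}_{1,p}(0,L)`, as the infimum of the
asymmetric energy over normalized admissible functions. -/
noncomputable def lam1 (p a b L : ℝ) : ℝ :=
  sInf { E : ℝ | ∃ u u' : ℝ → ℝ, Adm L u u' ∧
    (∫ t in (0:ℝ)..L, |u t| ^ p) = 1 ∧
    E = ∫ t in (0:ℝ)..L, asymE p a b (u' t) }

/-- `u` (a C¹ function on `[0,L]` with derivative `u'` and zero boundary values)
is a weak solution of `-Δ^{a,b}_p u = g` on `(0,L)`. -/
def IsWeakSol (p a b L : ℝ) (u u' g : ℝ → ℝ) : Prop :=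
  Adm L u u' ∧
  ∀ φ φ' : ℝ → ℝ, Adm L φ φ' →
    (∫ t in (0:ℝ)..L, asymFlux p a b (u' t) * φ' t) =
      ∫ t in (0:ℝ)..L, g t * φ t

theorem flux_mul (p a b s : ℝ) (hp : 1 < p) : asymFlux p a b s * s = asymE p a b s := by
  unfold asymFlux asymE
  have key : ∀ x : ℝ, 0 < x → x ^ (p - 1) * x = x ^ p := by
    intro x hx
    rw [← Real.rpow_add_one hx.ne']; congr 1; ring
  have h0 : (0:ℝ) ^ (p - 1) = 0 := Real.zero_rpow (by linarith)
  have h1 : (0:ℝ) ^ p = 0 := Real.zero_rpow (by linarith)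
  rcases lt_trichotomy s 0 with h | h | h
  · rw [max_eq_right h.le, max_eq_left (by linarith), h0, h1, ← key (-s) (by linarith)]; ring
  · subst h; simp [h1]
  · rw [max_eq_left h.le, max_eq_right (by linarith), h0, h1, ← key s h]; ring

theorem asymE_one (p s : ℝ) (hp : 1 < p) : asymE p 1 1 s = |s| ^ p := by
  unfold asymE
  have h1 : (0:ℝ) ^ p = 0 := Real.zero_rpow (by linarith)
  rcases le_total s 0 with h | h
  · rw [max_eq_right h, max_eq_left (by linarith), h1, abs_of_nonpos h]; simp
  · rw [max_eq_left h, max_eq_right (by linarith), h1, abs_of_nonneg h]; simp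

theorem flux_one (p s : ℝ) (hp : 1 < p) : asymFlux p 1 1 s = |s| ^ (p - 2) * s := by
  by_cases hs : s = 0
  · subst hs; simp [asymFlux]
  · apply mul_right_cancel₀ hs
    rw [flux_mul p 1 1 s hp, asymE_one p s hp, mul_assoc, ← abs_mul_abs_self s, ← mul_assoc,
      ← Real.rpow_add_one (abs_pos.2 hs).ne', ← Real.rpow_add_one (abs_pos.2 hs).ne']
    congr 1; ring

theorem cont_flux (p a b : ℝ) (hp : 1 < p) : Continuous (asymFlux p a b) := by
  unfold asymFlux
  have h : 0 ≤ p - 1 := by linarith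
  exact (continuous_const.mul ((continuous_id.max continuous_const).rpow_const
    (fun _ => Or.inr h))).sub
    (continuous_const.mul ((continuous_neg.max continuous_const).rpow_const
    (fun _ => Or.inr h)))

theorem cont_E (p a b : ℝ) (hp : 1 < p) : Continuous (asymE p a b) := by
  unfold asymE
  have h : 0 ≤ p := by linarith
  exact (continuous_const.mul ((continuous_id.max continuous_const).rpow_const
    (fun _ => Or.inr h))).add
    (continuous_const.mul ((continuous_neg.max continuous_const).rpow_const
    (fun _ => Or.inr h)))

theorem asymE_nonneg (p a b s : ℝ) (ha : 0 < a) (hb : 0 < b) : 0 ≤ asymE p a b s := by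
  unfold asymE
  have := le_max_right s 0
  have := le_max_right (-s) 0
  positivity

theorem asymE_eq_zero (p a b s : ℝ) (ha : 0 < a) (hb : 0 < b) (h : asymE p a b s = 0) :
    s = 0 := by
  by_contra hs
  unfold asymE at h
  have h1 : 0 ≤ max s 0 := le_max_right s 0
  have h2 : 0 ≤ max (-s) 0 := le_max_right (-s) 0
  have hA : 0 ≤ a ^ p * (max s 0) ^ p := by positivity
  have hB : 0 ≤ b ^ p * (max (-s) 0) ^ p := by positivity
  rcases lt_or_gt_of_ne hs with h' | h'
  · have : 0 < max (-s) 0 := lt_max_of_lt_left (by linarith)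
    have : 0 < b ^ p * (max (-s) 0) ^ p := by positivity
    linarith
  · have : 0 < max s 0 := lt_max_of_lt_left h'
    have : 0 < a ^ p * (max s 0) ^ p := by positivity
    linarith

theorem asymE_smul (p a b k s : ℝ) (hk : 0 ≤ k) :
    asymE p a b (k * s) = k ^ p * asymE p a b s := by
  unfold asymE
  have e1 : max (k * s) 0 = k * max s 0 := by rw [mul_max_of_nonneg _ _ hk, mul_zero]
  have e2 : max (-(k * s)) 0 = k * max (-s) 0 := by
    rw [mul_max_of_nonneg _ _ hk, mul_zero]; congr 1; ring
  rw [e1, e2, Real.mul_rpow hk (le_max_right _ _), Real.mul_rpow hk (le_max_right _ _)]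
  ring

theorem zero_of_integral {f : ℝ → ℝ} (hf : Continuous f) (h0 : ∀ t, 0 ≤ f t) {x y : ℝ}
    (hxy : x < y) (hI : ∫ t in x..y, f t = 0) : ∀ t ∈ Icc x y, f t = 0 := by
  intro t ht
  by_contra hne
  have : 0 < ∫ t in x..y, f t :=
    intervalIntegral.integral_pos hxy hf.continuousOn (fun s _ => h0 s)
      ⟨t, ht, lt_of_le_of_ne (h0 t) (Ne.symm hne)⟩
  linarith

theorem dbr {L : ℝ} (hL : 0 < L) {w g : ℝ → ℝ} (hw : Continuous w) (hg : Continuous g)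
    (h : ∀ φ φ' : ℝ → ℝ, Continuous φ' → (∀ t, HasDerivAt φ (φ' t) t) → φ 0 = 0 → φ L = 0 →
      (∫ t in (0:ℝ)..L, w t * φ' t) = ∫ t in (0:ℝ)..L, g t * φ t) :
    ∃ K : ℝ, ∀ t ∈ Icc 0 L, w t = K - ∫ s in (0:ℝ)..t, g s := by
  set G : ℝ → ℝ := fun t => ∫ s in (0:ℝ)..t, g s with hG
  have hGd : ∀ t, HasDerivAt G (g t) t := fun t => hg.integral_hasStrictDerivAt 0 t |>.hasDerivAt
  have hGc : Continuous G := continuous_iff_continuousAt.2 fun t => (hGd t).continuousAt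
  set K : ℝ := (∫ t in (0:ℝ)..L, (w t + G t)) / L with hK
  set ψ : ℝ → ℝ := fun t => w t + G t - K with hψ
  have hψc : Continuous ψ := by fun_prop
  set φ : ℝ → ℝ := fun t => ∫ s in (0:ℝ)..t, ψ s with hφ
  have hφd : ∀ t, HasDerivAt φ (ψ t) t := fun t => hψc.integral_hasStrictDerivAt 0 t |>.hasDerivAt
  have hφc : Continuous φ := continuous_iff_continuousAt.2 fun t => (hφd t).continuousAt
  have hφ0 : φ 0 = 0 := by simp [hφ]
  have hφL : φ L = 0 := by
    simp only [hφ, hψ]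
    have e := intervalIntegral.integral_sub (μ := MeasureTheory.volume) (a := 0) (b := L)
      (f := fun t => w t + G t) (g := fun _ => K)
      ((hw.add hGc).intervalIntegrable _ _) (continuous_const.intervalIntegrable _ _)
    rw [e]
    simp only [intervalIntegral.integral_const, smul_eq_mul, hK]
    field_simp
    ring
  have h1 := h φ ψ hψc hφd hφ0 hφL
  have h2 := intervalIntegral.integral_mul_deriv_eq_deriv_mul (a := 0) (b := L)
    (fun t _ => hGd t) (fun t _ => hφd t) (hg.intervalIntegrable _ _) (hψc.intervalIntegrable _ _)
  have h3 : ∫ t in (0:ℝ)..L, ψ t = 0 := hφL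
  have h4 : ∫ t in (0:ℝ)..L, ψ t ^ 2 = 0 := by
    have : ∀ t, ψ t ^ 2 = w t * ψ t + G t * ψ t - K * ψ t := by
      intro t; simp only [hψ]; ring
    simp_rw [this]
    have e1 := intervalIntegral.integral_sub (μ := MeasureTheory.volume) (a := 0) (b := L)
      (f := fun t => w t * ψ t + G t * ψ t) (g := fun t => K * ψ t)
      (((hw.mul hψc).add (hGc.mul hψc)).intervalIntegrable _ _)
      ((continuous_const.mul hψc).intervalIntegrable _ _)
    have e2 := intervalIntegral.integral_add (μ := MeasureTheory.volume) (a := 0) (b := L)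
      (f := fun t => w t * ψ t) (g := fun t => G t * ψ t)
      ((hw.mul hψc).intervalIntegrable _ _) ((hGc.mul hψc).intervalIntegrable _ _)
    rw [e1, e2, intervalIntegral.integral_const_mul, h1, h2, h3,
      hφ0, hφL]
    ring
  refine ⟨K, fun t ht => ?_⟩
  have := zero_of_integral (hψc.pow 2) (fun t => sq_nonneg _) hL h4 t ht
  have : ψ t = 0 := by simpa using this
  simp only [hψ] at this
  linarith

theorem energy_eq {L : ℝ} {w g U U' : ℝ → ℝ} (hg : Continuous g)
    (hU' : Continuous U') (hU : ∀ t, HasDerivAt U (U' t) t) {K : ℝ}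
    (hK : ∀ t ∈ Icc 0 L, w t = K - ∫ s in (0:ℝ)..t, g s)
    {x y : ℝ} (hx : 0 ≤ x) (hxy : x ≤ y) (hy : y ≤ L) (ux : U x = 0) (uy : U y = 0) :
    ∫ t in x..y, w t * U' t = ∫ t in x..y, g t * U t := by
  have hGd : ∀ t, HasDerivAt (fun t => K - ∫ s in (0:ℝ)..t, g s) (-g t) t := fun t =>
    (hg.integral_hasStrictDerivAt 0 t |>.hasDerivAt).const_sub K
  have h2 := intervalIntegral.integral_mul_deriv_eq_deriv_mul (a := x) (b := y)
    (fun t _ => hGd t) (fun t _ => hU t) (hg.neg.intervalIntegrable _ _)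
    (hU'.intervalIntegrable _ _)
  have h3 : ∫ t in x..y, w t * U' t = ∫ t in x..y, (K - ∫ s in (0:ℝ)..t, g s) * U' t := by
    apply intervalIntegral.integral_congr
    intro t ht
    rw [uIcc_of_le hxy] at ht
    simp only
    rw [hK t ⟨hx.trans ht.1, ht.2.trans hy⟩]
  rw [h3, h2, ux, uy]
  simp

theorem lam1_le {p a b L : ℝ} (hp : 1 < p) (ha : 0 < a) (hb : 0 < b) (hL : 0 < L)
    {U U' : ℝ → ℝ} (hU' : Continuous U') (hU : ∀ t, HasDerivAt U (U' t) t) {c x y : ℝ}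
    (hxy : x < y) (ux : U x = 0) (uy : U y = 0)
    (hM : 0 < ∫ t in x..y, |U t| ^ p)
    (hE : ∫ t in x..y, asymE p a b (U' t) = c * ∫ t in x..y, |U t| ^ p) :
    lam1 p a b L ≤ ((y - x) / L) ^ p * c := by
  set r := (y - x) / L with hr
  have hr0 : 0 < r := div_pos (by linarith) hL
  have hrL : r * L = y - x := by rw [hr]; field_simp
  set M := ∫ t in x..y, |U t| ^ p with hMd
  set k := (r / M) ^ (1 / p) with hk
  have hk0 : 0 < k := by positivity
  have hkp : k ^ p = r / M := by
    rw [hk, ← Real.rpow_mul (by positivity), one_div_mul_cancel (by linarith), Real.rpow_one]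
  unfold lam1
  apply csInf_le
  · refine ⟨0, ?_⟩
    rintro E ⟨v, v', -, -, rfl⟩
    exact intervalIntegral.integral_nonneg hL.le fun t _ => asymE_nonneg p a b _ ha hb
  · have hcomp : ∀ f : ℝ → ℝ, ∫ t in (0:ℝ)..L, f (r * t + x) = r⁻¹ * ∫ t in x..y, f t := by
      intro f
      rw [intervalIntegral.integral_comp_mul_add _ hr0.ne']
      simp [hrL]
    refine ⟨fun t => k * U (r * t + x), fun t => k * r * U' (r * t + x), ⟨⟨?_, ?_⟩, ?_, ?_⟩, ?_, ?_⟩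
    · intro t _
      apply HasDerivAt.hasDerivWithinAt
      have hin : HasDerivAt (fun t : ℝ => r * t + x) r t := by
        simpa using ((hasDerivAt_id t).const_mul r).add_const x
      have := ((hU (r * t + x)).comp t hin).const_mul k
      exact this.congr_deriv (by ring)
    · exact (by fun_prop : Continuous fun t => k * r * U' (r * t + x)).continuousOn
    · simp [ux]
    · simp [hrL, uy]
    · have : ∀ t, |k * U (r * t + x)| ^ p = k ^ p * (|U (r * t + x)| ^ p) := by
        intro t
        rw [abs_mul, abs_of_pos hk0, Real.mul_rpow hk0.le (abs_nonneg _)]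
      simp_rw [this]
      rw [intervalIntegral.integral_const_mul, hcomp (fun t => |U t| ^ p), ← hMd, hkp]
      field_simp
    · have : ∀ t, asymE p a b (k * r * U' (r * t + x))
          = (k ^ p * r ^ p) * asymE p a b (U' (r * t + x)) := by
        intro t
        rw [asymE_smul p a b _ _ (by positivity), Real.mul_rpow hk0.le hr0.le]
      simp_rw [this]
      rw [intervalIntegral.integral_const_mul, hcomp (fun t => asymE p a b (U' t)), hE, hkp]
      field_simp

theorem extend_C1 {L : ℝ} (hL : 0 < L) {u u' : ℝ → ℝ} (h : Adm L u u') :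
    ∃ U U' : ℝ → ℝ, Continuous U' ∧ (∀ t, HasDerivAt U (U' t) t) ∧
      (∀ t ∈ Icc 0 L, U t = u t) ∧ (∀ t ∈ Icc 0 L, U' t = u' t) := by
  obtain ⟨⟨hd, hc⟩, h0, -⟩ := h
  set U' : ℝ → ℝ := IccExtend hL.le ((Icc 0 L).domRestrict u') with hU'
  have hU'c : Continuous U' := (continuousOn_iff_continuous_domRestrict.1 hc).Icc_extend'
  have hag : ∀ t ∈ Icc 0 L, U' t = u' t := fun t ht => by
    rw [hU', IccExtend_of_mem hL.le _ ht]; rfl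
  refine ⟨fun t => ∫ s in (0:ℝ)..t, U' s, U', hU'c,
    fun t => (hU'c.integral_hasStrictDerivAt 0 t).hasDerivAt, fun t ht => ?_, hag⟩
  have hsub : Icc 0 t ⊆ Icc 0 L := Icc_subset_Icc_right ht.2
  have := intervalIntegral.integral_eq_sub_of_hasDerivAt_of_le ht.1 (f := u) (f' := U')
    (fun s hs => (hd s (hsub hs)).continuousWithinAt.mono hsub)
    (fun s hs => by
      rw [hag s (hsub (Ioo_subset_Icc_self hs))]
      exact (hd s (hsub (Ioo_subset_Icc_self hs))).hasDerivAt
        (Icc_mem_nhds hs.1 (hs.2.trans_le ht.2)))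
    (hU'c.intervalIntegrable _ _)
  simp only [this, h0, sub_zero]

theorem stmt2 (p a b L : ℝ) (hp : 1 < p) (ha : 0 < a) (hb : 0 < b) (hL : 0 < L)
    (u u' : ℝ → ℝ)
    (hsol : IsWeakSol p a b L u u' (fun t => lam1 p a b L * |u t| ^ (p - 2) * u t))
    (hne : ∃ t ∈ Set.Icc (0:ℝ) L, u t ≠ 0) :
    (∀ t ∈ Set.Ioo (0:ℝ) L, 0 < u t) ∨ (∀ t ∈ Set.Ioo (0:ℝ) L, u t < 0) := by
  obtain ⟨hadm, hweak⟩ := hsol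
  obtain ⟨U, U', hU'c, hU, hag, hag'⟩ := extend_C1 hL hadm
  have hUc : Continuous U := continuous_iff_continuousAt.2 fun t => (hU t).continuousAt
  have hU0 : U 0 = 0 := by rw [hag 0 ⟨le_rfl, hL.le⟩]; exact hadm.2.1
  have hUL : U L = 0 := by rw [hag L ⟨hL.le, le_rfl⟩]; exact hadm.2.2
  set lam := lam1 p a b L with hlam
  have hgc : Continuous fun t => lam * asymFlux p 1 1 (U t) :=
    continuous_const.mul ((cont_flux p 1 1 hp).comp hUc)
  obtain ⟨K, hK⟩ := dbr hL ((cont_flux p a b hp).comp hU'c) hgc (by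
    intro φ φ' hφ' hφ h0 h1
    have := hweak φ φ' ⟨⟨fun t _ => (hφ t).hasDerivWithinAt, hφ'.continuousOn⟩, h0, h1⟩
    convert this using 1
    · apply intervalIntegral.integral_congr
      intro t ht
      rw [uIcc_of_le hL.le] at ht
      simp only [Function.comp, hag' t ht]
    · apply intervalIntegral.integral_congr
      intro t ht
      rw [uIcc_of_le hL.le] at ht
      simp only [hag t ht, flux_one p _ hp]
      ring)
  have hen : ∀ x y : ℝ, 0 ≤ x → x ≤ y → y ≤ L → U x = 0 → U y = 0 →
      ∫ t in x..y, asymE p a b (U' t) = lam * ∫ t in x..y, |U t| ^ p := by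
    intro x y hx hxy hy ux uy
    have := energy_eq hgc hU'c hU hK hx hxy hy ux uy
    simp only [Function.comp, flux_mul p a b _ hp, mul_assoc, flux_mul p 1 1 _ hp,
      asymE_one p _ hp, intervalIntegral.integral_const_mul] at this
    exact this
  have hpc : Continuous fun t => |U t| ^ p :=
    hUc.abs.rpow_const (fun _ => Or.inr (by linarith))
  have hnn : ∀ t, 0 ≤ |U t| ^ p := fun t => by positivity
  obtain ⟨t0, ht0, hut0⟩ := hne
  rw [← hag t0 ht0] at hut0
  have hE0 : 0 < ∫ t in (0:ℝ)..L, asymE p a b (U' t) := by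
    apply lt_of_le_of_ne
      (intervalIntegral.integral_nonneg hL.le fun t _ => asymE_nonneg p a b _ ha hb)
    intro h
    have hz := zero_of_integral ((cont_E p a b hp).comp hU'c)
      (fun t => asymE_nonneg p a b _ ha hb) hL h.symm
    have hz' : ∀ t ∈ Icc 0 L, U' t = 0 := fun t ht => asymE_eq_zero p a b _ ha hb (hz t ht)
    apply hut0
    have h2 := intervalIntegral.integral_eq_sub_of_hasDerivAt (a := 0) (b := t0)
      (fun t _ => hU t) (hU'c.intervalIntegrable _ _)
    have h3 : ∫ t in (0:ℝ)..t0, U' t = ∫ t in (0:ℝ)..t0, (0:ℝ) := by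
      apply intervalIntegral.integral_congr
      intro t ht
      rw [uIcc_of_le ht0.1] at ht
      exact hz' t ⟨ht.1, ht.2.trans ht0.2⟩
    rw [h3, hU0] at h2
    simpa using h2.symm
  have hlam0 : 0 < lam := by
    rw [hen 0 L le_rfl hL.le le_rfl hU0 hUL] at hE0
    exact pos_of_mul_pos_left hE0 (intervalIntegral.integral_nonneg hL.le fun t _ => hnn t)
  have hvan : ∀ x y : ℝ, 0 ≤ x → x < y → y ≤ L → y - x < L → U x = 0 → U y = 0 →
      ∀ t ∈ Icc x y, U t = 0 := by
    intro x y hx hxy hy hlt ux uy t ht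
    have hM : ∫ t in x..y, |U t| ^ p = 0 := by
      by_contra hne
      have hM : 0 < ∫ t in x..y, |U t| ^ p :=
        lt_of_le_of_ne (intervalIntegral.integral_nonneg hxy.le fun t _ => hnn t) (Ne.symm hne)
      have h1 := lam1_le hp ha hb hL hU'c hU hxy ux uy hM (hen x y hx hxy.le hy ux uy)
      rw [← hlam] at h1
      have h2 : ((y - x) / L) ^ p < 1 :=
        Real.rpow_lt_one (div_nonneg (by linarith) hL.le) ((div_lt_one hL).2 hlt) (by linarith)
      nlinarith
    have := zero_of_integral hpc hnn hxy hM t ht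
    rw [Real.rpow_eq_zero (abs_nonneg _) (by linarith)] at this
    exact abs_eq_zero.1 this
  have hnz : ∀ c ∈ Ioo 0 L, U c ≠ 0 := by
    intro c hc hc0
    apply hut0
    rcases le_total t0 c with h | h
    · exact hvan 0 c le_rfl hc.1 hc.2.le (by linarith [hc.2]) hU0 hc0 t0 ⟨ht0.1, h⟩
    · exact hvan c L hc.1.le hc.2 le_rfl (by linarith [hc.1]) hc0 hUL t0 ⟨h, ht0.2⟩
  by_contra hcon
  rw [not_or] at hcon
  obtain ⟨h1, h2⟩ := hcon
  push Not at h1 h2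
  obtain ⟨s, hs, hs'⟩ := h1
  obtain ⟨t, ht, ht'⟩ := h2
  rw [← hag s (Ioo_subset_Icc_self hs)] at hs'
  rw [← hag t (Ioo_subset_Icc_self ht)] at ht'
  obtain ⟨c, hc, hc0⟩ := isPreconnected_Ioo.intermediate_value hs ht hUc.continuousOn ⟨hs', ht'⟩
  exact hnz c hc hc0
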